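/- Let n ≥ 3 be an odd integer and θ ∈ (0, π/4]. There is a unique point t_{n−1,n}^θ ∈ (t_{n,n}, +∞) such that tan θ·H_n(t_{n−1,n}^θ) = H_n(t_{n−1,1}), where t_{n−1,1} is the smallest zero of H_{n−1}. Then: (1) for every t ≥ t_{n,n}, the function x ↦ Φ_n^θ(x,t) has exactly one zero in the interval (−∞, t_{n,1}]; (2) for every t > t_{n−1,n}^θ, the function x ↦ Φ_n^θ(x,t) has exactly one zero in ℝ; (3) if 0 < θ₁ < θ₂ ≤ π/4, then t_{n−1,n}^{θ₂} < t_{n−1,n}^{θ₁}. -/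

import Mathlib

open Polynomial Real Set

/-- Physicists' Hermite polynomials: `H 0 = 1`, `H 1 = 2X`,
`H (n+2) = 2X * H (n+1) - 2(n+1) * H n`. -/
noncomputable def hermiteH : ℕ → Polynomial ℝ
  | 0 => 1
  | 1 => Polynomial.C 2 * Polynomial.X
  | (n + 2) => Polynomial.C 2 * Polynomial.X * hermiteH (n + 1)
      - Polynomial.C ((2 * (n + 1) : ℕ) : ℝ) * hermiteH n

/-- `z : Fin m → ℝ` enumerates the zeros of `P` in increasing order. -/
def IsZeroEnum (P : Polynomial ℝ) (m : ℕ) (z : Fin m → ℝ) : Prop :=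
  StrictMono z ∧ (∀ i, P.eval (z i) = 0) ∧ (∀ x : ℝ, P.eval x = 0 → ∃ i, x = z i)

/-- The eigenfunction `Φ_n^θ`. -/
noncomputable def Phi (n : ℕ) (θ : ℝ) (p : ℝ × ℝ) : ℝ :=
  (Real.cos θ * (hermiteH n).eval p.1 + Real.sin θ * (hermiteH n).eval p.2) *
    Real.exp (-(p.1 ^ 2 + p.2 ^ 2) / 2)

/-- A critical zero of `u` : a common zero of `u` and its differential. -/
def IsCriticalZero (u : ℝ × ℝ → ℝ) (p : ℝ × ℝ) : Prop :=
  u p = 0 ∧ fderiv ℝ u p = 0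

/-- Nodal set of `u`. -/
def nodalSet (u : ℝ × ℝ → ℝ) : Set (ℝ × ℝ) := {p | u p = 0}

/-- The set of nodal domains of `u`, i.e. of connected components of the
complement of the nodal set. -/
def nodalDomains (u : ℝ × ℝ → ℝ) : Set (Set (ℝ × ℝ)) :=
  {C | ∃ p, u p ≠ 0 ∧ C = connectedComponentIn {q | u q ≠ 0} p}

open Filter

theorem hermiteH_add_two (m : ℕ) :
    hermiteH (m + 2) = C 2 * X * hermiteH (m + 1) - C ((2 * (m + 1) : ℕ) : ℝ) * hermiteH m := by
  rw [hermiteH]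

theorem derivative_hermiteH_succ (m : ℕ) :
    derivative (hermiteH (m + 1)) = C (2 * ((m : ℝ) + 1)) * hermiteH m := by
  induction m using Nat.twoStepInduction with
  | zero => simp [hermiteH]
  | one =>
    simp only [hermiteH, derivative_mul, derivative_sub, derivative_C, derivative_X,
      derivative_one]
    simp only [map_mul, map_add, map_natCast, Nat.cast_mul, Nat.cast_add]
    simp
    ring
  | more k ih0 ih1 =>
    have h : hermiteH (k + 2) = C 2 * X * hermiteH (k + 1) - derivative (hermiteH (k + 1)) := by
      rw [ih0, hermiteH_add_two]
      push_cast
      rfl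
    rw [hermiteH_add_two (k + 1)]
    simp only [derivative_mul, derivative_sub, derivative_C, derivative_X]
    rw [show k + 1 + 1 = k + 2 from rfl] at ih1 ⊢
    rw [ih1]
    have h' : derivative (hermiteH (k + 1)) = C 2 * X * hermiteH (k + 1) - hermiteH (k + 2) := by
      rw [h]; ring
    rw [h']
    simp only [map_mul, map_add, map_natCast, Nat.cast_mul, Nat.cast_add, map_one, Nat.cast_one,
      map_ofNat, Nat.cast_ofNat]
    ring

theorem hermiteH_succ_eq (m : ℕ) :
    hermiteH (m + 1) = C 2 * X * hermiteH m - derivative (hermiteH m) := by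
  cases m with
  | zero => simp [hermiteH]
  | succ k =>
    rw [derivative_hermiteH_succ, hermiteH_add_two]
    push_cast
    rfl

theorem eval_neg_hermiteH (m : ℕ) (x : ℝ) :
    (hermiteH m).eval (-x) = (-1) ^ m * (hermiteH m).eval x := by
  induction m using Nat.twoStepInduction with
  | zero => simp [hermiteH]
  | one => simp [hermiteH]
  | more k ih0 ih1 =>
    simp only [hermiteH_add_two, eval_sub, eval_mul, eval_C, eval_X, ih0, ih1]
    ring

theorem natDegree_hermiteH_le (m : ℕ) : (hermiteH m).natDegree ≤ m := by
  induction m using Nat.twoStepInduction with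
  | zero => simp [hermiteH]
  | one =>
    rw [hermiteH]
    exact (natDegree_C_mul_le _ _).trans natDegree_X_le
  | more k ih0 ih1 =>
    have hX : (C 2 * X * hermiteH (k + 1)).natDegree ≤ k + 2 :=
      calc (C 2 * X * hermiteH (k + 1)).natDegree
        _ ≤ (X * hermiteH (k + 1)).natDegree := by
          rw [mul_assoc]
          exact natDegree_C_mul_le _ _
        _ ≤ (X : ℝ[X]).natDegree + (hermiteH (k + 1)).natDegree := natDegree_mul_le
        _ ≤ k + 2 := by
          rw [natDegree_X]
          omega
    have hC : (C ((2 * (k + 1) : ℕ) : ℝ) * hermiteH k).natDegree ≤ k + 2 :=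
      (natDegree_C_mul_le _ _).trans (ih0.trans (Nat.le_add_right k 2))
    rw [hermiteH_add_two]
    exact (natDegree_sub_le _ _).trans (max_le hX hC)

theorem coeff_hermiteH_self (m : ℕ) : (hermiteH m).coeff m = 2 ^ m := by
  induction m using Nat.twoStepInduction with
  | zero => simp [hermiteH]
  | one => simp [hermiteH]
  | more k ih0 ih1 =>
    rw [hermiteH_add_two, coeff_sub, mul_assoc, coeff_C_mul, coeff_C_mul, coeff_X_mul, ih1,
      coeff_eq_zero_of_natDegree_lt
        (lt_of_le_of_lt (natDegree_hermiteH_le k) (by omega : k < k + 2))]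
    ring

theorem natDegree_hermiteH (m : ℕ) : (hermiteH m).natDegree = m :=
  natDegree_eq_of_le_of_coeff_ne_zero (natDegree_hermiteH_le m)
    (by rw [coeff_hermiteH_self]; positivity)

theorem tendsto_eval_hermiteH_atTop {m : ℕ} (hm : 0 < m) :
    Tendsto (fun x => (hermiteH m).eval x) atTop atTop := by
  apply tendsto_atTop_of_leadingCoeff_nonneg
  · exact natDegree_pos_iff_degree_pos.1 (by rwa [natDegree_hermiteH])
  · rw [leadingCoeff, natDegree_hermiteH, coeff_hermiteH_self]
    positivity

theorem eval_neg_hermiteH_of_even {m : ℕ} (hm : Even m) (x : ℝ) :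
    (hermiteH m).eval (-x) = (hermiteH m).eval x := by
  rw [eval_neg_hermiteH, hm.neg_one_pow, one_mul]

theorem eval_neg_hermiteH_of_odd {m : ℕ} (hm : Odd m) (x : ℝ) :
    (hermiteH m).eval (-x) = -(hermiteH m).eval x := by
  rw [eval_neg_hermiteH, hm.neg_one_pow, neg_one_mul]

theorem hasDerivAt_eval_hermiteH_succ (m : ℕ) (x : ℝ) :
    HasDerivAt (fun x => (hermiteH (m + 1)).eval x)
      (2 * ((m : ℝ) + 1) * (hermiteH m).eval x) x := by
  have := (hermiteH (m + 1)).hasDerivAt x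
  rwa [derivative_hermiteH_succ, eval_mul, eval_C] at this

/-- Sonin's function for `H_{m+1}` decreases on the negative half-line. -/
theorem antitoneOn_sonin_hermiteH (m : ℕ) :
    AntitoneOn (fun x => (hermiteH (m + 1)).eval x ^ 2 +
      2 * ((m : ℝ) + 1) * (hermiteH m).eval x ^ 2) (Iic 0) := by
  have hd (x : ℝ) : HasDerivAt (fun x => (hermiteH (m + 1)).eval x ^ 2 +
      2 * ((m : ℝ) + 1) * (hermiteH m).eval x ^ 2)
      (8 * ((m : ℝ) + 1) * x * (hermiteH m).eval x ^ 2) x := by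
    have h := ((hasDerivAt_eval_hermiteH_succ m x).pow 2).add
      ((((hermiteH m).hasDerivAt x).pow 2).const_mul (2 * ((m : ℝ) + 1)))
    refine h.congr_deriv ?_
    rw [hermiteH_succ_eq m]
    simp only [eval_sub, eval_mul, eval_C, eval_X]
    ring
  apply antitoneOn_of_deriv_nonpos (convex_Iic 0)
  · exact fun x _ => (hd x).continuousAt.continuousWithinAt
  · exact fun x _ => (hd x).differentiableAt.differentiableWithinAt
  · intro x hx
    rw [interior_Iic, mem_Iio] at hx
    rw [(hd x).deriv]
    have : 0 ≤ 8 * ((m : ℝ) + 1) * (hermiteH m).eval x ^ 2 := by positivity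
    nlinarith

theorem eval_hermiteH_pos_of_lt {m : ℕ} (hm : 0 < m) (he : Even m) {a : ℝ}
    (ha : ∀ x, (hermiteH m).eval x = 0 → a ≤ x) {x : ℝ} (hx : x < a) :
    0 < (hermiteH m).eval x := by
  by_contra! hneg
  obtain ⟨y, hy0, hyx⟩ := (((tendsto_eval_hermiteH_atTop hm).eventually_gt_atTop 0).and
    (eventually_ge_atTop (-x))).exists
  rw [← eval_neg_hermiteH_of_even he] at hy0
  have hyx' : -y ≤ x := by linarith
  obtain ⟨c, hc, hc0⟩ := intermediate_value_Icc' hyx' (hermiteH m).continuous.continuousOn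
    ⟨hneg, hy0.le⟩
  linarith [ha c hc0, hc.2]

theorem strictMonoOn_hermiteH_Iic {m : ℕ} (hm : 0 < m) (he : Even m) {a : ℝ}
    (ha : ∀ x, (hermiteH m).eval x = 0 → a ≤ x) :
    StrictMonoOn (fun x => (hermiteH (m + 1)).eval x) (Iic a) := by
  apply strictMonoOn_of_deriv_pos (convex_Iic a) (hermiteH (m + 1)).continuous.continuousOn
  intro x hx
  rw [interior_Iic, mem_Iio] at hx
  rw [(hasDerivAt_eval_hermiteH_succ m x).deriv]
  have := eval_hermiteH_pos_of_lt hm he ha hx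
  positivity

theorem strictMonoOn_hermiteH_Ici {m : ℕ} (hm : 0 < m) (he : Even m) {a : ℝ}
    (ha : ∀ x, (hermiteH m).eval x = 0 → a ≤ x) :
    StrictMonoOn (fun x => (hermiteH (m + 1)).eval x) (Ici (-a)) := by
  intro x hx y hy hxy
  have hx' : -a ≤ x := hx
  have hy' : -a ≤ y := hy
  have h := strictMonoOn_hermiteH_Iic hm he ha
    (mem_Iic.2 (neg_le.1 hy')) (mem_Iic.2 (neg_le.1 hx')) (neg_lt_neg hxy)
  simp only [eval_neg_hermiteH_of_odd he.add_one] at h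
  exact neg_lt_neg_iff.1 h

/-- The smallest zero of `H_{m+1}` lies to the left of every zero of `H_m`. -/
theorem IsZeroEnum.first_lt {m : ℕ} {u : Fin (m + 1) → ℝ} {z : Fin m → ℝ}
    (hu : IsZeroEnum (hermiteH (m + 1)) (m + 1) u) (hz : IsZeroEnum (hermiteH m) m z)
    (i : Fin m) : u 0 < z i := by
  have key (j : Fin m) : ∃ k : Fin m, u j.castSucc < z k ∧ z k < u j.succ := by
    obtain ⟨c, hc, hc0⟩ := exists_hasDerivAt_eq_zero (hu.1 j.castSucc_lt_succ)
      (hermiteH (m + 1)).continuous.continuousOn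
      ((hu.2.1 j.castSucc).trans (hu.2.1 j.succ).symm)
      (fun x _ => hasDerivAt_eval_hermiteH_succ m x)
    obtain ⟨k, rfl⟩ := hz.2.2 c ((mul_eq_zero.1 hc0).resolve_left (by positivity))
    exact ⟨k, hc⟩
  choose g hg using key
  have hmono : StrictMono g := by
    intro j k hjk
    have h : u j.succ ≤ u k.castSucc := hu.1.monotone (Fin.succ_le_castSucc_iff.2 hjk)
    exact hz.1.lt_iff_lt.1 ((hg j).2.trans (h.trans_lt (hg k).1))
  obtain ⟨j, rfl⟩ := Finite.surjective_of_injective hmono.injective i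
  exact (hu.1.monotone (Fin.zero_le _)).trans_lt (hg j).1

/-- To the right of the smallest critical point `a`, an odd `H_{m+1}` is bounded below by the
opposite of its value at `a`. -/
theorem neg_eval_le_eval_hermiteH {m : ℕ} (hm : 0 < m) (he : Even m) {a : ℝ}
    (h0 : (hermiteH m).eval a = 0) (ha : ∀ x, (hermiteH m).eval x = 0 → a ≤ x)
    (hpos : 0 ≤ (hermiteH (m + 1)).eval a) {x : ℝ} (hx : a ≤ x) :
    -(hermiteH (m + 1)).eval a ≤ (hermiteH (m + 1)).eval x := by
  have hodd := eval_neg_hermiteH_of_odd he.add_one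
  rcases le_total (-a) x with hxa | hxa
  · rw [← hodd]
    exact (strictMonoOn_hermiteH_Ici hm he ha).monotoneOn self_mem_Ici hxa hxa
  have sq (y : ℝ) (hay : a ≤ y) (hy : y ≤ 0) :
      (hermiteH (m + 1)).eval y ^ 2 ≤ (hermiteH (m + 1)).eval a ^ 2 := by
    have h := antitoneOn_sonin_hermiteH m (mem_Iic.2 (hay.trans hy)) (mem_Iic.2 hy) hay
    simp only [h0] at h
    have : 0 ≤ 2 * ((m : ℝ) + 1) * (hermiteH m).eval y ^ 2 := by positivity
    linarith
  have hsq : (hermiteH (m + 1)).eval x ^ 2 ≤ (hermiteH (m + 1)).eval a ^ 2 := by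
    rcases le_total x 0 with h | h
    · exact sq x hx h
    · have := sq (-x) (by linarith) (by linarith)
      rwa [hodd, neg_sq] at this
  exact (abs_le_of_sq_le_sq' hsq hpos).1

theorem Phi_eq_zero_iff {n : ℕ} {θ : ℝ} (hθ : 0 < cos θ) (x t : ℝ) :
    Phi n θ (x, t) = 0 ↔ (hermiteH n).eval x = -(tan θ * (hermiteH n).eval t) := by
  rw [Phi, mul_eq_zero, or_iff_left (exp_pos _).ne', tan_eq_sin_div_cos]
  field_simp
  exact ⟨fun h => by linarith, fun h => by linarith⟩

/-- (Barrier lemma, horizontal version.) Let `n ≥ 3` be odd.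
For `θ ∈ (0, π/4]` there is a unique `s > t_{n,n}` with
`tan θ * H_n(s) = H_n(t_{n-1,1})`; denoting it `t_{n-1,n}^θ`:
(1) for every `t ≥ t_{n,n}`, `x ↦ Φ_n^θ(x,t)` has exactly one zero in `(-∞, t_{n,1}]`;
(2) for every `t > t_{n-1,n}^θ`, `x ↦ Φ_n^θ(x,t)` has exactly one zero in `ℝ`;
(3) if `0 < θ₁ < θ₂ ≤ π/4`, then `t_{n-1,n}^{θ₂} < t_{n-1,n}^{θ₁}`. -/
theorem barrier_lemma_horizontal
    (n : ℕ) (hn3 : 3 ≤ n) (hodd : Odd n)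
    (tn : Fin n → ℝ) (htn : IsZeroEnum (hermiteH n) n tn)
    (tz : Fin (n - 1) → ℝ) (htz : IsZeroEnum (hermiteH (n - 1)) (n - 1) tz) :
    (∀ θ ∈ Set.Ioc (0:ℝ) (π / 4),
      (∃! s : ℝ, tn ⟨n - 1, by omega⟩ < s ∧
        Real.tan θ * (hermiteH n).eval s = (hermiteH n).eval (tz ⟨0, by omega⟩)) ∧
      ∀ s : ℝ, (tn ⟨n - 1, by omega⟩ < s ∧
          Real.tan θ * (hermiteH n).eval s = (hermiteH n).eval (tz ⟨0, by omega⟩)) →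
        (∀ t : ℝ, tn ⟨n - 1, by omega⟩ ≤ t →
          ∃! x : ℝ, x ∈ Set.Iic (tn ⟨0, by omega⟩) ∧ Phi n θ (x, t) = 0) ∧
        (∀ t : ℝ, s < t → ∃! x : ℝ, Phi n θ (x, t) = 0)) ∧
    (∀ θ₁ θ₂ s₁ s₂ : ℝ, 0 < θ₁ → θ₁ < θ₂ → θ₂ ≤ π / 4 →
      (tn ⟨n - 1, by omega⟩ < s₁ ∧
        Real.tan θ₁ * (hermiteH n).eval s₁ = (hermiteH n).eval (tz ⟨0, by omega⟩)) →
      (tn ⟨n - 1, by omega⟩ < s₂ ∧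
        Real.tan θ₂ * (hermiteH n).eval s₂ = (hermiteH n).eval (tz ⟨0, by omega⟩)) →
      s₂ < s₁) := by
  obtain ⟨m, rfl⟩ : ∃ m, n = m + 1 := ⟨n - 1, by omega⟩
  have he : Even m := by
    rcases Nat.even_or_odd m with h | h
    · exact h
    · exact absurd hodd (Nat.not_odd_iff_even.2 h.add_one)
  have hm : 0 < m := by omega
  set P : ℝ → ℝ := fun x => (hermiteH (m + 1)).eval x with hP
  set u := tn ⟨0, by omega⟩ with hu
  set v := tn ⟨m + 1 - 1, by omega⟩ with hv
  set a := tz ⟨0, by omega⟩ with ha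
  have hua : u < a := htn.first_lt htz ⟨0, hm⟩
  have hu0 : P u = 0 := htn.2.1 _
  have hv0 : P v = 0 := htn.2.1 _
  have ha0 : (hermiteH m).eval a = 0 := htz.2.1 _
  have hamin (x : ℝ) (hx : (hermiteH m).eval x = 0) : a ≤ x := by
    obtain ⟨i, rfl⟩ := htz.2.2 x hx
    exact htz.1.monotone (Fin.mk_le_of_le_val (Nat.zero_le _))
  have hPodd (x : ℝ) : P (-x) = -P x := eval_neg_hermiteH_of_odd hodd x
  have hav : -a < v := by
    obtain ⟨i, hi⟩ := htn.2.2 (-u) (by simpa [hu0] using hPodd u)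
    have : tn i ≤ v := htn.1.monotone (Fin.le_def.2 (by have := i.2; simp; omega))
    linarith
  have hleft : StrictMonoOn P (Iic a) := strictMonoOn_hermiteH_Iic hm he hamin
  have hright : StrictMonoOn P (Ici (-a)) := strictMonoOn_hermiteH_Ici hm he hamin
  have hcont : Continuous P := (hermiteH (m + 1)).continuous
  have htop : Tendsto P atTop atTop := tendsto_eval_hermiteH_atTop (Nat.succ_pos m)
  have hPa : 0 < P a := hu0 ▸ hleft hua.le self_mem_Iic hua
  have hlow {x : ℝ} (hx : a ≤ x) : -P a ≤ P x :=
    neg_eval_le_eval_hermiteH hm he ha0 hamin hPa.le hx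
  have hvmem {t : ℝ} (ht : v ≤ t) : t ∈ Ici (-a) := mem_Ici.2 (hav.le.trans ht)
  have hnonneg {t : ℝ} (ht : v ≤ t) : 0 ≤ P t :=
    hv0 ▸ hright.monotoneOn (hvmem le_rfl) (hvmem ht) ht
  have hexU (c : ℝ) (hc : c ≤ 0) : ∃ x ≤ u, P x = c := by
    obtain ⟨y, hy, hyu⟩ := ((htop.eventually_ge_atTop (-c)).and
      (eventually_ge_atTop (-u))).exists
    have h1 : P (-y) ≤ c := by rw [hPodd]; linarith
    obtain ⟨x, hx, hxc⟩ := intermediate_value_Icc (by linarith : -y ≤ u) hcont.continuousOn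
      ⟨h1, hc.trans hu0.ge⟩
    exact ⟨x, hx.2, hxc⟩
  have htan {θ : ℝ} (h0 : 0 < θ) (h1 : θ ≤ π / 4) : 0 < tan θ :=
    tan_pos_of_pos_of_lt_pi_div_two h0 (by linarith [pi_pos])
  refine ⟨fun θ hθ => ⟨?_, fun s hs => ⟨fun t ht => ?_, fun t ht => ?_⟩⟩, ?_⟩
  · have hT := htan hθ.1 hθ.2
    obtain ⟨y, hy, hyv⟩ := ((htop.eventually_ge_atTop (P a / tan θ)).and
      (eventually_ge_atTop v)).exists
    obtain ⟨s, hs, hsP⟩ := intermediate_value_Icc hyv hcont.continuousOn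
      ⟨hv0.trans_le (div_pos hPa hT).le, hy⟩
    have hvs : v < s := by
      refine lt_of_le_of_ne hs.1 ?_
      rintro rfl
      exact (div_pos hPa hT).ne (hv0.symm.trans hsP)
    refine ⟨s, ⟨hvs, ?_⟩, fun r hr => ?_⟩
    · change tan θ * P s = P a
      rw [hsP]
      field_simp
    · refine hright.injOn (hvmem hr.1.le) (hvmem hvs.le) ?_
      rw [hsP, eq_div_iff hT.ne', mul_comm]
      exact hr.2
  · have hT := htan hθ.1 hθ.2
    have hC : 0 < cos θ := cos_pos_of_mem_Ioo ⟨by linarith [pi_pos, hθ.1],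
      by linarith [pi_pos, hθ.2]⟩
    simp only [Phi_eq_zero_iff hC]
    obtain ⟨x, hxu, hx⟩ := hexU (-(tan θ * P t))
      (neg_nonpos.2 (mul_nonneg hT.le (hnonneg ht)))
    exact ⟨x, ⟨hxu, hx⟩, fun y hy => hleft.injOn (mem_Iic.2 ((mem_Iic.1 hy.1).trans hua.le))
      (mem_Iic.2 (hxu.trans hua.le)) (hy.2.trans hx.symm)⟩
  · have hT := htan hθ.1 hθ.2
    have hC : 0 < cos θ := cos_pos_of_mem_Ioo ⟨by linarith [pi_pos, hθ.1],
      by linarith [pi_pos, hθ.2]⟩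
    simp only [Phi_eq_zero_iff hC]
    have hvt : v ≤ t := hs.1.le.trans ht.le
    have hlt : P a < tan θ * P t :=
      hs.2.symm.trans_lt (mul_lt_mul_of_pos_left (hright (hvmem hs.1.le) (hvmem hvt) ht) hT)
    obtain ⟨x, hxu, hx⟩ := hexU (-(tan θ * P t)) (by linarith)
    refine ⟨x, hx, fun y hy => ?_⟩
    have hy' : P y = -(tan θ * P t) := hy
    have hya : y ≤ a := by
      by_contra! h
      linarith [hlow h.le]
    exact hleft.injOn hya (mem_Iic.2 (hxu.trans hua.le)) (hy'.trans hx.symm)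
  · intro θ₁ θ₂ s₁ s₂ h0 h12 h2 hs₁ hs₂
    have hlt : tan θ₁ < tan θ₂ := tan_lt_tan_of_lt_of_lt_pi_div_two
      (by linarith [pi_pos]) (by linarith [pi_pos]) h12
    have hT := htan h0 (h12.le.trans h2)
    by_contra! hle
    have h3 : P s₁ ≤ P s₂ := hright.monotoneOn (hvmem hs₁.1.le) (hvmem hs₂.1.le) hle
    have h4 : 0 < P s₂ := hv0 ▸ hright (hvmem le_rfl) (hvmem hs₂.1.le) hs₂.1
    have e1 : tan θ₁ * P s₁ = P a := hs₁.2
    have e2 : tan θ₂ * P s₂ = P a := hs₂.2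
    nlinarith [mul_le_mul_of_nonneg_left h3 hT.le, mul_lt_mul_of_pos_right hlt h4]
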